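/- arXiv:1803.00857 — 3 statements merged into one kernel-verified Lean document; each statement's English description precedes it below -/
import Mathlib

section
/- Let K be a field, V a finite-dimensional K-vector space, and u : V → V a K-linear endomorphism whose range and kernel are complementary subspaces, i.e. V = range(u) ⊕ ker(u). Then there exists a polynomial P ∈ K[X] with constant coefficient zero such that the endomorphism π := P(u) (obtained by substituting u into P) is idempotent, has range(π) = range(u) and ker(π) = ker(u); that is, π is the projection of V onto range(u) along ker(u). -/
/-!
Write the minimal polynomial of `u` as `X ^ k * g` with `g(0) ≠ 0`. Since `range u` and `ker u`
meet trivially, `u ^ k * g(u) = 0` already forces `u * g(u) = 0`. Put `P = 1 - g / g(0)`: then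
`P(0) = 0`, so `P = X * Q`, and `u * P(u) = u`. These two identities show that `P(u)` is idempotent
with the same range and kernel as `u`.
-/

/-- If `range u` and `ker u` are disjoint, then `u` has no higher generalized kernel. -/
lemma apply_eq_zero_of_pow_apply_eq_zero
    {K : Type*} [Field K] {V : Type*} [AddCommGroup V] [Module K V] {u : Module.End K V}
    (h : Disjoint (LinearMap.range u) (LinearMap.ker u)) (k : ℕ) {x : V}
    (hx : (u ^ k) x = 0) : u x = 0 := by
  induction k generalizing x with
  | zero => simp_all
  | succ k ih =>
    rw [pow_succ, Module.End.mul_apply] at hx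
    exact Submodule.disjoint_def.mp h _ ⟨x, rfl⟩ (ih hx)

/-- Cayley–Hamilton style statement: if the range and kernel of an endomorphism `u` of a
finite-dimensional vector space are complementary, then the projection onto `range u`
along `ker u` can be written as a polynomial with zero constant term in `u`. -/
theorem exists_poly_projection_of_isCompl_range_ker
    (K : Type*) [Field K] (V : Type*) [AddCommGroup V] [Module K V]
    [FiniteDimensional K V] (u : Module.End K V)
    (h : IsCompl (LinearMap.range u) (LinearMap.ker u)) :
    ∃ P : Polynomial K, P.coeff 0 = 0 ∧
      (Polynomial.aeval u P) ∘ₗ (Polynomial.aeval u P) = Polynomial.aeval u P ∧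
      LinearMap.range (Polynomial.aeval u P) = LinearMap.range u ∧
      LinearMap.ker (Polynomial.aeval u P) = LinearMap.ker u := by
  obtain ⟨g, hg, hndvd⟩ := Polynomial.exists_eq_pow_rootMultiplicity_mul_and_not_dvd
    (minpoly K u) (minpoly.ne_zero (Algebra.IsIntegral.isIntegral u)) 0
  rw [Polynomial.C_0, sub_zero] at hg hndvd
  rw [Polynomial.X_dvd_iff] at hndvd
  have hug : u * Polynomial.aeval u g = 0 := by
    ext x
    have h0 := minpoly.aeval K u
    rw [hg, map_mul, map_pow, Polynomial.aeval_X] at h0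
    exact apply_eq_zero_of_pow_apply_eq_zero h.disjoint _ (LinearMap.congr_fun h0 x)
  let P : Polynomial K := 1 - Polynomial.C (g.coeff 0)⁻¹ * g
  have hP0 : P.coeff 0 = 0 := by simp [P, hndvd]
  have huP : u * Polynomial.aeval u P = u := by
    simp [P, mul_sub, ← Algebra.smul_def, hug]
  obtain ⟨Q, hQ⟩ := Polynomial.X_dvd_iff.mpr hP0
  have hPuQ : Polynomial.aeval u P = u * Polynomial.aeval u Q := by
    rw [hQ, map_mul, Polynomial.aeval_X]
  have hPQu : Polynomial.aeval u P = Polynomial.aeval u Q * u := by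
    rw [hQ, mul_comm, map_mul, Polynomial.aeval_X]
  have hPu : Polynomial.aeval u P * u = u := by
    nth_rewrite 1 [hPuQ]
    rw [mul_assoc, ← hPQu, huP]
  refine ⟨P, hP0, ?_, le_antisymm ?_ ?_, le_antisymm ?_ ?_⟩
  · change Polynomial.aeval u P * Polynomial.aeval u P = Polynomial.aeval u P
    nth_rewrite 1 [hPQu]
    rw [mul_assoc, huP, ← hPQu]
  · rw [hPuQ]
    exact LinearMap.range_comp_le_range _ _
  · conv_lhs => rw [← hPu]
    exact LinearMap.range_comp_le_range _ _
  · conv_rhs => rw [← huP]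
    exact LinearMap.ker_le_ker_comp _ _
  · rw [hPQu]
    exact LinearMap.ker_le_ker_comp _ _
end

section
/- Let W be a vector space over ℚ and let U be a ℂ-submodule of the complexification ℂ ⊗_ℚ W. Suppose that for every ring automorphism σ of ℂ, the ℚ-linear map σ ⊗ id_W : ℂ ⊗_ℚ W → ℂ ⊗_ℚ W maps U onto U. Then U is defined over ℚ: there exists a ℚ-subspace W₀ ⊆ W such that U is the ℂ-linear span of the set {1 ⊗ w : w ∈ W₀} inside ℂ ⊗_ℚ W. -/
open TensorProduct

/-!
The fixed field of `Aut(ℂ)` is `ℚ`. Indeed, given a transcendence basis of `ℂ` over a subring `R`,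
every automorphism of the polynomial ring on it extends to `ℂ`, because `ℂ` is an algebraic closure
of that ring (`exists_ringEquiv_extending`). A transcendental number `z` is moved by changing the
sign of the members of a transcendence basis over `ℚ` containing `z`; an irrational algebraic number
is moved by a Galois automorphism of the algebraic closure of `ℚ`, acting on coefficients.

Let `W₀` be the set of `w` with `1 ⊗ w ∈ U`. That `U` is spanned by `1 ⊗ W₀` is proved by induction
on the support of `u ∈ U` with respect to a rational basis. If some nonzero element of `U` has
strictly smaller support, subtracting a multiple of it shrinks the support of `u`. Otherwise
normalise one coordinate of `u` to `1`: then `σ u - u` lies in `U` with strictly smaller support, so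
it vanishes, and the coordinates of `u`, being fixed by `Aut(ℂ)`, are rational.
-/

/-- A ring automorphism of the polynomial ring on a transcendence basis extends to the whole
algebraically closed field. It need not fix the coefficient ring `R`. -/
theorem exists_ringEquiv_extending {R K ι : Type*} [CommRing R] [Field K] [IsAlgClosed K]
    [Algebra R K] {x : ι → K} (hx : IsTranscendenceBasis R x)
    (φ : MvPolynomial ι R ≃+* MvPolynomial ι R) :
    ∃ σ : K ≃+* K, ∀ p, σ (MvPolynomial.aeval x p) = MvPolynomial.aeval x (φ p) := by
  let := IsAlgClosed.isAlgClosure_of_transcendence_basis x hx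
  let e := (hx.1.aevalEquiv.symm.toRingEquiv.trans φ).trans hx.1.aevalEquiv.toRingEquiv
  refine ⟨IsAlgClosure.equivOfEquiv K K e, fun p => ?_⟩
  have h := IsAlgClosure.equivOfEquiv_algebraMap K K e (hx.1.aevalEquiv p)
  simpa [e] using h

theorem exists_ringEquiv_ne_of_transcendental {z : ℂ} (hz : Transcendental ℚ z) :
    ∃ σ : ℂ ≃+* ℂ, σ z ≠ z := by
  obtain ⟨s, hzs, hs⟩ := exists_isTranscendenceBasis_superset (R := ℚ) (s := {z})
    ((algebraicIndependent_singleton_iff (x := fun i : ({z} : Set ℂ) => (i : ℂ)) ⟨z, rfl⟩).2 hz)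
  -- The involution negating every variable sends `z` to `-z`.
  let f : MvPolynomial s ℚ →ₐ[ℚ] MvPolynomial s ℚ :=
    MvPolynomial.aeval fun i => -MvPolynomial.X i
  have hf : f.comp f = AlgHom.id ℚ _ := by ext i; simp [f]
  obtain ⟨σ, hσ⟩ := exists_ringEquiv_extending hs (AlgEquiv.ofAlgHom f f hf hf).toRingEquiv
  refine ⟨σ, fun h => ?_⟩
  have h1 := hσ (MvPolynomial.X ⟨z, hzs rfl⟩)
  simp only [MvPolynomial.aeval_X, h] at h1
  have h2 : z = -z := by simpa [f] using h1
  exact hz (self_eq_neg.1 h2 ▸ isAlgebraic_zero)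

theorem exists_ringEquiv_ne_of_isAlgebraic {z : ℂ} (hz : IsAlgebraic ℚ z)
    (hzQ : z ∉ (algebraMap ℚ ℂ).range) : ∃ σ : ℂ ≃+* ℂ, σ z ≠ z := by
  let A := algebraicClosure ℚ ℂ
  have : IsAlgClosure ℚ A := algebraicClosure.isAlgClosure ℚ ℂ
  have : IsGalois ℚ A := IsAlgClosure.isGalois ℚ A
  let a : A := ⟨z, mem_algebraicClosure_iff.2 hz⟩
  obtain ⟨τ, hτ⟩ : ∃ τ : A ≃ₐ[ℚ] A, τ a ≠ a := by
    by_contra! h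
    obtain ⟨q, hq⟩ := IntermediateField.mem_bot.1 ((InfiniteGalois.mem_bot_iff_fixed a).2 h)
    exact hzQ ⟨q, congrArg (algebraMap A ℂ) hq⟩
  obtain ⟨ι, x, hx⟩ := exists_isTranscendenceBasis' A ℂ
  obtain ⟨σ, hσ⟩ := exists_ringEquiv_extending hx (MvPolynomial.mapEquiv ι τ.toRingEquiv)
  refine ⟨σ, fun h => hτ (Subtype.ext ?_)⟩
  have h1 := hσ (MvPolynomial.C a)
  simp only [MvPolynomial.mapEquiv_apply, MvPolynomial.map_C, MvPolynomial.aeval_C] at h1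
  exact h1.symm.trans h

/-- The fixed field of `Aut(ℂ)` is `ℚ`. -/
theorem mem_range_of_forall_ringEquiv {z : ℂ} (h : ∀ σ : ℂ ≃+* ℂ, σ z = z) :
    z ∈ (algebraMap ℚ ℂ).range := by
  by_contra hzQ
  by_cases hz : IsAlgebraic ℚ z
  · obtain ⟨σ, hσ⟩ := exists_ringEquiv_ne_of_isAlgebraic hz hzQ
    exact hσ (h σ)
  · obtain ⟨σ, hσ⟩ := exists_ringEquiv_ne_of_transcendental hz
    exact hσ (h σ)

/-- In coordinates with respect to a rational basis, `σ ⊗ id` is the coordinatewise action of `σ`. -/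
theorem repr_rTensor {ι W : Type*} [AddCommGroup W] [Module ℚ W] (b : Module.Basis ι ℚ W)
    (σ : ℂ ≃+* ℂ) (u : ℂ ⊗[ℚ] W) (i : ι) :
    (Algebra.TensorProduct.basis ℂ b).repr
      (LinearMap.rTensor W (σ.toRingHom.toRatAlgHom.toLinearMap) u) i =
      σ ((Algebra.TensorProduct.basis ℂ b).repr u i) := by
  induction u with
  | zero => simp
  | add u v hu hv => simp only [map_add, Finsupp.add_apply, hu, hv]
  | tmul c w => simp [Algebra.TensorProduct.basis_repr_tmul]

/-- Galois descent: a ℂ-subspace of `ℂ ⊗_ℚ W` stable under every automorphism of ℂ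
(acting on the left factor) is defined over ℚ. -/
theorem galois_descent_defined_over_Q
    (W : Type*) [AddCommGroup W] [Module ℚ W]
    (U : Submodule ℂ (ℂ ⊗[ℚ] W))
    (hstab : ∀ σ : ℂ ≃+* ℂ,
      Submodule.map
        (LinearMap.rTensor W (σ.toRingHom.toRatAlgHom.toLinearMap))
        (U.restrictScalars ℚ) = U.restrictScalars ℚ) :
    ∃ W₀ : Submodule ℚ W,
      U = Submodule.span ℂ ((fun w : W => (1 : ℂ) ⊗ₜ[ℚ] w) '' (W₀ : Set W)) := by
  classical
  let W₀ : Submodule ℚ W := (U.restrictScalars ℚ).comap (TensorProduct.mk ℚ ℂ W 1)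
  refine ⟨W₀, le_antisymm ?_ (Submodule.span_le.2 ?_)⟩
  swap
  · rintro _ ⟨w, hw, rfl⟩
    exact hw
  let b := Module.Basis.ofVectorSpace ℚ W
  let B := Algebra.TensorProduct.basis ℂ b
  have hσ (σ : ℂ ≃+* ℂ) {u} (hu : u ∈ U) :
      LinearMap.rTensor W (σ.toRingHom.toRatAlgHom.toLinearMap) u ∈ U := by
    rw [← Submodule.restrictScalars_mem ℚ, ← hstab σ]
    exact Submodule.mem_map_of_mem hu
  intro u hu
  induction hn : (B.repr u).support using Finset.strongInduction generalizing u with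
  | H S ih =>
  subst hn
  by_cases hmin : ∃ v ∈ U, v ≠ 0 ∧ (B.repr v).support ⊂ (B.repr u).support
  · obtain ⟨v, hv, hv0, hvu⟩ := hmin
    obtain ⟨i, hi⟩ := Finsupp.support_nonempty_iff.2 (B.repr.map_ne_zero_iff.2 hv0)
    have hi' := Finsupp.mem_support_iff.1 hi
    set c := B.repr u i / B.repr v i with hc
    have hlt : (B.repr (u - c • v)).support ⊂ (B.repr u).support := by
      refine (Finset.ssubset_iff_of_subset fun j hj => ?_).2 ⟨i, hvu.1 hi, ?_⟩
      · by_contra hju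
        have hjv : j ∉ (B.repr v).support := fun h => hju (hvu.1 h)
        simp_all
      · simp [hc, hi']
    have h1 := ih _ hlt (U.sub_mem hu (U.smul_mem c hv)) rfl
    have h2 := ih _ hvu hv rfl
    simpa using Submodule.add_mem _ h1 (Submodule.smul_mem _ c h2)
  · push Not at hmin
    by_cases hu0 : u = 0
    · rw [hu0]; exact Submodule.zero_mem _
    obtain ⟨i, hi⟩ := Finsupp.support_nonempty_iff.2 (B.repr.map_ne_zero_iff.2 hu0)
    have hi' := Finsupp.mem_support_iff.1 hi
    set v := (B.repr u i)⁻¹ • u with hv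
    have hvU : v ∈ U := U.smul_mem _ hu
    have hvi : B.repr v i = 1 := by simp [hv, hi']
    have hfix (σ : ℂ ≃+* ℂ) (j) : σ (B.repr v j) = B.repr v j := by
      have hrep (k) : B.repr (LinearMap.rTensor W (σ.toRingHom.toRatAlgHom.toLinearMap) v) k
        = σ (B.repr v k) := repr_rTensor b σ v k
      by_contra hne
      refine hmin (_ - v) (U.sub_mem (hσ σ hvU) hvU) (fun h0 => hne ?_) ?_
      · rw [← hrep, sub_eq_zero.1 h0]
      · refine (Finset.ssubset_iff_of_subset fun k hk => ?_).2 ⟨i, hi, ?_⟩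
        · by_contra hku
          have hkv : B.repr v k = 0 := by
            simp [hv, Finsupp.notMem_support_iff.1 hku]
          rw [Finsupp.mem_support_iff, map_sub, Finsupp.sub_apply, hrep, hkv] at hk
          simp at hk
        · rw [Finsupp.notMem_support_iff, map_sub, Finsupp.sub_apply, hrep, hvi]
          simp
    choose q hq using fun j => mem_range_of_forall_ringEquiv fun σ => hfix σ j
    have hvw : v = 1 ⊗ₜ[ℚ] (∑ j ∈ (B.repr v).support, q j • b j) := by
      conv_lhs => rw [← B.linearCombination_repr v]
      rw [Finsupp.linearCombination_apply, Finsupp.sum, TensorProduct.tmul_sum]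
      refine Finset.sum_congr rfl fun j _ => ?_
      rw [← hq j, TensorProduct.tmul_smul, Algebra.TensorProduct.basis_apply]
      exact algebraMap_smul ℂ (q j) _
    have hvspan : v ∈ Submodule.span ℂ ((fun w : W => (1 : ℂ) ⊗ₜ[ℚ] w) '' (W₀ : Set W)) :=
      Submodule.subset_span ⟨_, show (1 : ℂ) ⊗ₜ[ℚ] _ ∈ U from hvw ▸ hvU, hvw.symm⟩
    have : u = B.repr u i • v := by rw [hv, smul_inv_smul₀ hi']
    rw [this]
    exact Submodule.smul_mem _ _ hvspan
end

section
/- For a finitely supported function d : ℤ → ℕ define its level ℓ(d) := max{|m| : d(m) ≠ 0}, and for finitely supported d, e : ℤ → ℕ define their convolution by (d * e)(m) := Σ_{i ∈ ℤ} d(i)·e(m − i). If d and e are both nonzero and e is symmetric, i.e. e(−m) = e(m) for all m ∈ ℤ, then ℓ(d * e) = ℓ(d) + ℓ(e). -/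
/-!
The levels are attained: choose `a` in the support of `d` and `b` in the support of `e` of maximal
absolute value. By symmetry of `e`, also `-b` lies in its support, so `b` may be taken to have the
same sign as `a`, whence `|a + b| = |a| + |b|`. Since all values are natural numbers, no
cancellation occurs in a convolution: `m` lies in its support exactly when `m = i + j` with `i`, `j`
in the supports of the factors (`convolution_ne_zero_iff`). So `a + b` is in the support, giving
one inequality, and the triangle inequality gives the other.
-/

/-- The level of a finitely supported function `d : ℤ →₀ ℕ`:
the maximum of `|m|` over the support of `d`. -/
def levelFinsupp (d : ℤ →₀ ℕ) : ℕ := d.support.sup fun m => m.natAbs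

lemma natAbs_le_levelFinsupp {d : ℤ →₀ ℕ} {m : ℤ} (hm : d m ≠ 0) :
    m.natAbs ≤ levelFinsupp d :=
  Finset.le_sup (f := fun m : ℤ => m.natAbs) (Finsupp.mem_support_iff.mpr hm)

lemma exists_natAbs_eq_levelFinsupp {d : ℤ →₀ ℕ} (hd : d ≠ 0) :
    ∃ m, d m ≠ 0 ∧ levelFinsupp d = m.natAbs := by
  obtain ⟨m, hm, h⟩ := Finset.exists_mem_eq_sup d.support
    (Finsupp.support_nonempty_iff.mpr hd) fun m => m.natAbs
  exact ⟨m, Finsupp.mem_support_iff.mp hm, h⟩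

lemma convolution_ne_zero_iff (d e : ℤ →₀ ℕ) (m : ℤ) :
    (d.sum fun i di => di * e (m - i)) ≠ 0 ↔ ∃ i, d i ≠ 0 ∧ e (m - i) ≠ 0 := by
  simp only [Finsupp.sum, ne_eq, Finset.sum_eq_zero_iff, Finsupp.mem_support_iff, mul_eq_zero]
  grind

/-- If `f` is the convolution of two nonzero finitely supported functions `d, e : ℤ →₀ ℕ`
and `e` is symmetric, then the level of `f` is the sum of the levels of `d` and `e`. -/
theorem level_convolution_eq_add
    (d e f : ℤ →₀ ℕ) (hd : d ≠ 0) (he : e ≠ 0)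
    (hsym : ∀ m : ℤ, e (-m) = e m)
    (hf : ∀ m : ℤ, f m = d.sum fun i di => di * e (m - i)) :
    levelFinsupp f = levelFinsupp d + levelFinsupp e := by
  apply le_antisymm
  · refine Finset.sup_le fun m hm => ?_
    rw [Finsupp.mem_support_iff, hf, convolution_ne_zero_iff] at hm
    obtain ⟨i, hi, hj⟩ := hm
    have h₁ := natAbs_le_levelFinsupp hi
    have h₂ := natAbs_le_levelFinsupp hj
    omega
  · obtain ⟨a, ha, hda⟩ := exists_natAbs_eq_levelFinsupp hd
    obtain ⟨b, hb, heb⟩ := exists_natAbs_eq_levelFinsupp he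
    -- Replace `b` by whichever of `b`, `-b` has the same sign as `a`.
    obtain ⟨c, hc, hac⟩ : ∃ c, e c ≠ 0 ∧ (a + c).natAbs = a.natAbs + b.natAbs := by
      by_cases h : (a + b).natAbs = a.natAbs + b.natAbs
      · exact ⟨b, hb, h⟩
      · exact ⟨-b, by rwa [hsym], by omega⟩
    rw [hda, heb, ← hac]
    apply natAbs_le_levelFinsupp
    rw [hf, convolution_ne_zero_iff]
    exact ⟨a, ha, by rwa [add_sub_cancel_left]⟩
end
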